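/- Let K be a finite n-dimensional simplicial complex embedded in Euclidean space, let L be a subdivision of K, and let ν^i be an i-simplex of L whose open simplex is contained in the open r-simplex μ^r of K. Then the stratification rank and the generalized angle defect are preserved: r_L(ν^i) = r_K(μ^r) and D_L(ν^i) = D_K(μ^r), where the left-hand sides are computed in L and the right-hand sides in K. -/

import Mathlib

open Filter MeasureTheory Geometry
open scoped BigOperators

noncomputable section

attribute [local instance 0] Classical.propDecidable

namespace AngleDefectPaper

/-- `N`-dimensional Euclidean space. -/
abbrev Euc (N : ℕ) : Type := EuclideanSpace ℝ (Fin N)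

variable {N : ℕ}

/-- The open simplex determined by a finite set of points: the intrinsic
(relative) interior of its convex hull. -/
def openSimplex (s : Finset (Euc N)) : Set (Euc N) :=
  intrinsicInterior ℝ (convexHull ℝ (s : Set (Euc N)))

/-- The normalized solid angle `α(η, σ)` of the simplex `σ` along its face `η`:
the fraction of a small sphere (in the affine span of `σ`) centered at a point of
the open face `η` that lies in `σ`, normalized so that the full sphere has
measure `1`.  It is computed as the limiting fraction of a small ambient ball
centered at the centroid of `η` that lies in the cylinder obtained by thickening
`σ` in the directions orthogonal to its affine span. -/
def solidAngle (η σ : Finset (Euc N)) : ℝ :=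
  limUnder (nhdsWithin (0 : ℝ) (Set.Ioi 0)) fun ε =>
    (volume (Metric.ball (η.centroid ℝ id) ε ∩
      {y : Euc N | ∃ c ∈ convexHull ℝ (σ : Set (Euc N)),
        ∃ w ∈ (vectorSpan ℝ (σ : Set (Euc N)))ᗮ, y = c + w})).toReal /
    (volume (Metric.ball (η.centroid ℝ id) ε)).toReal

/-- `Tcone r` is (a realization in the plane of) the open cone on `r` points:
`r` half-open segments emanating from the origin in pairwise distinct
directions, glued at the origin.  For `r = 0` it is a single point. -/
def Tcone (r : ℕ) : Set (ℝ × ℝ) :=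
  {0} ∪ ⋃ k ∈ Finset.range r,
    {p : ℝ × ℝ | ∃ t : ℝ, 0 ≤ t ∧ t < 1 ∧ p = t • ((1 : ℝ), (k : ℝ))}

/-- `x` has a neighborhood in `S` homeomorphic to `T_r × ℝ^{n-1}`, with the
homeomorphism taking `x` into the apex set `{cone point} × ℝ^{n-1}`. -/
def HasConeNbhd (n r : ℕ) (S : Set (Euc N)) (x : Euc N) : Prop :=
  ∃ U : Set (Euc N), U ∈ nhdsWithin x S ∧ U ⊆ S ∧
    ∃ h : U ≃ₜ (Tcone r) × EuclideanSpace ℝ (Fin (n - 1)),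
      ∀ hx : x ∈ U, ((h ⟨x, hx⟩).1 : ℝ × ℝ) = 0

/-- The set of points of `|K|` having a neighborhood of cone type `r`. -/
def csetAux (n : ℕ) (K : SimplicialComplex ℝ (Euc N)) (r : ℕ) : Set (Euc N) :=
  {x | x ∈ K.space ∧ HasConeNbhd n r K.space x}

/-- The sets `C_r(K)`: for `r ≠ 2` the points with a cone-type-`r` neighborhood,
and `C_2(K)` is the complement in `|K|` of the union of the others. -/
def cset (n : ℕ) (K : SimplicialComplex ℝ (Euc N)) (r : ℕ) : Set (Euc N) :=
  if r = 2 then K.space \ ⋃ r' ∈ {r' : ℕ | r' ≠ 2}, csetAux n K r'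
  else csetAux n K r

/-- The stratification rank `r(η) = r/2`, where `C_r(K)` is the (unique) set of
the stratification containing the open simplex of `η`. -/
def strRank (n : ℕ) (K : SimplicialComplex ℝ (Euc N)) (η : Finset (Euc N)) : ℝ :=
  if h : ∃ r : ℕ, r ≠ 2 ∧ openSimplex η ⊆ csetAux n K r then (h.choose : ℝ) / 2
  else 1

/-- The set of `n`-simplices of `K` having `η` as a face. -/
def nSimplicesOn (n : ℕ) (K : SimplicialComplex ℝ (Euc N)) (η : Finset (Euc N)) :
    Set (Finset (Euc N)) :=
  {σ | σ ∈ K.faces ∧ σ.card = n + 1 ∧ η ⊆ σ}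

/-- The generalized angle defect `D(η) = r(η) - Σ_{σⁿ ≻ η} α(η, σⁿ)`. -/
def defect (n : ℕ) (K : SimplicialComplex ℝ (Euc N)) (η : Finset (Euc N)) : ℝ :=
  strRank n K η - ∑ᶠ σ ∈ nSimplicesOn n K η, solidAngle η σ

/-- The angle defect sequence `a_m = 4 B_{m+2} (2^{m+2} - 1)/(m+2)`, where `B_k`
is the `k`-th Bernoulli number (with the convention `B_1 = -1/2`). -/
def ads (m : ℕ) : ℚ :=
  4 * bernoulli (m + 2) * (2 ^ (m + 2) - 1) / (m + 2)

/-- The ascending stratified curvature of a simplex `τ` (of dimension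
`p = τ.card - 1`) in the `n`-dimensional complex `K`. -/
def asc (n : ℕ) (K : SimplicialComplex ℝ (Euc N)) (τ : Finset (Euc N)) : ℝ :=
  (ads (τ.card - 1) : ℝ) * defect n K τ +
    (ads (τ.card - 1) : ℝ) / 2 *
      ∑ i ∈ Finset.Icc τ.card n,
        (-1 : ℝ) ^ (i - (τ.card - 1)) *
          ∑ᶠ η ∈ {η : Finset (Euc N) | η ∈ K.faces ∧ η.card = i + 1 ∧ τ ⊆ η},
            defect n K η

/-- The stratified Euler characteristic `χˢ(K) = Σ_{η ∈ K} r(η) (-1)^{dim η}`. -/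
def stratEuler (n : ℕ) (K : SimplicialComplex ℝ (Euc N)) : ℝ :=
  ∑ᶠ η ∈ K.faces, strRank n K η * (-1 : ℝ) ^ (η.card - 1)

/-- `fcount F k` is the number of `k`-dimensional simplices in `F`. -/
def fcount (F : Set (Finset (Euc N))) (k : ℕ) : ℕ :=
  {s ∈ F | s.card = k + 1}.ncard

/-- The combinatorial Euler characteristic `χ(F) = Σ_k (-1)^k f_k(F)`. -/
def eulerChar (F : Set (Finset (Euc N))) : ℤ :=
  ∑ᶠ k : ℕ, (-1 : ℤ) ^ k * fcount F k

/-- The link of `η` in `K`: all simplices `ω` of `K` disjoint from `η` such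
that the join `η ∗ ω` is a simplex of `K`. -/
def linkFaces (K : SimplicialComplex ℝ (Euc N)) (η : Finset (Euc N)) :
    Set (Finset (Euc N)) :=
  {ω | ω ∈ K.faces ∧ Disjoint η ω ∧ η ∪ ω ∈ K.faces}

/-- `K` is an `n`-dimensional simplicial complex. -/
def IsNDim (n : ℕ) (K : SimplicialComplex ℝ (Euc N)) : Prop :=
  (∀ s ∈ K.faces, s.card ≤ n + 1) ∧ ∃ s ∈ K.faces, s.card = n + 1

/-- `L` is a subdivision of `K`: same underlying space, and every open simplex
of `L` is contained in an open simplex of `K`. -/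
def IsSubdivision (K L : SimplicialComplex ℝ (Euc N)) : Prop :=
  L.space = K.space ∧ ∀ s ∈ L.faces, ∃ t ∈ K.faces, openSimplex s ⊆ openSimplex t

/-! ### Barycentric coordinates -/

/-- Barycentric coordinates with respect to an affine basis `T` extending `s`. -/
structure Coords (s T : Finset (Euc N)) (c : Euc N → (Euc N →ᵃ[ℝ] ℝ)) : Prop where
  sub : s ⊆ T
  val : ∀ v ∈ T, ∀ w ∈ T, c v w = if v = w then 1 else 0
  zero : ∀ v, v ∉ T → ∀ p, c v p = 0
  sum : ∀ p, ∑ v ∈ T, c v p = 1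
  comb : ∀ p, ∑ v ∈ T, c v p • v = p

theorem exists_coords (s : Finset (Euc N)) (hs : AffineIndependent ℝ ((↑) : s → Euc N)) :
    ∃ T c, Coords s T c := by
  obtain ⟨t, hst, hti, htop⟩ := exists_subset_affineIndependent_affineSpan_eq_top
    (k := ℝ) (s := (s : Set (Euc N))) hs
  let b : AffineBasis t ℝ (Euc N) := ⟨(↑), hti, by simpa using htop⟩
  have : Finite t := b.finite
  have : Fintype t := Fintype.ofFinite t
  have hbv : ∀ i : t, b i = (i : Euc N) := fun i => rfl
  let c : Euc N → (Euc N →ᵃ[ℝ] ℝ) := fun v => if h : v ∈ t then b.coord ⟨v, h⟩ else 0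
  have hc : ∀ i : t, c i = b.coord i := fun i => by simp [c]
  have hT : ∀ v, v ∈ t.toFinset ↔ v ∈ t := fun v => Set.mem_toFinset
  refine ⟨t.toFinset, c, ?_, ?_, ?_, ?_, ?_⟩
  · intro v hv
    exact (hT v).2 (hst hv)
  · intro v hv w hw
    rw [hT] at hv hw
    have := b.coord_apply ⟨v, hv⟩ ⟨w, hw⟩
    rw [hbv, ← hc] at this
    simpa using this
  · intro v hv p
    rw [hT] at hv
    simp [c, hv]
  · intro p
    rw [← b.sum_coord_apply_eq_one p, Finset.sum_subtype (p := fun v => v ∈ t) _ hT]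
    exact Finset.sum_congr rfl fun i _ => by rw [hc]
  · intro p
    conv_rhs => rw [← b.linear_combination_coord_eq_self p]
    rw [Finset.sum_subtype (p := fun v => v ∈ t) _ hT]
    exact Finset.sum_congr rfl fun i _ => by rw [hc, hbv]

theorem affine_sum (f : Euc N →ᵃ[ℝ] ℝ) (s : Finset (Euc N)) (w : Euc N → ℝ)
    (hw : ∑ y ∈ s, w y = 1) : f (∑ y ∈ s, w y • y) = ∑ y ∈ s, w y * f y := by
  have hf : ∀ p, f p = f.linear p + f 0 := fun p => congrFun f.decomp p
  rw [hf, map_sum]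
  have h2 : ∀ y ∈ s, w y * f y = f.linear (w y • y) + w y * f 0 := fun y _ => by
    rw [hf y, map_smul, smul_eq_mul, mul_add]
  rw [Finset.sum_congr rfl h2, Finset.sum_add_distrib, ← Finset.sum_mul, hw, one_mul]

namespace Coords

variable {s T t : Finset (Euc N)} {c : Euc N → (Euc N →ᵃ[ℝ] ℝ)}

theorem val_comb (H : Coords s T c) (ht : t ⊆ s) (w : Euc N → ℝ) (hw : ∑ y ∈ t, w y = 1)
    (v : Euc N) : c v (∑ y ∈ t, w y • y) = if v ∈ t then w v else 0 := by
  rw [affine_sum _ _ _ hw]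
  have htT := ht.trans H.sub
  by_cases hv : v ∈ T
  · rw [Finset.sum_congr rfl (g := fun y => if v = y then w y else 0)]
    · simp
    · intro y hy
      rw [H.val v hv y (htT hy)]
      split_ifs <;> simp
  · rw [if_neg (fun h => hv (htT h))]
    exact Finset.sum_eq_zero fun y _ => by rw [H.zero v hv, mul_zero]

theorem comb_of_zero (H : Coords s T c) (ht : t ⊆ s) {p : Euc N}
    (hp : ∀ v, v ∉ t → c v p = 0) : ∑ v ∈ t, c v p = 1 ∧ ∑ v ∈ t, c v p • v = p := by
  have htT := ht.trans H.sub
  constructor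
  · rw [← H.sum p]
    exact Finset.sum_subset htT fun v _ hv => hp v hv
  · conv_rhs => rw [← H.comb p]
    exact Finset.sum_subset htT fun v _ hv => by rw [hp v hv, zero_smul]

theorem mem_convexHull_iff (H : Coords s T c) (ht : t ⊆ s) {p : Euc N} :
    p ∈ convexHull ℝ (t : Set (Euc N)) ↔ (∀ v ∈ t, 0 ≤ c v p) ∧ ∀ v, v ∉ t → c v p = 0 := by
  rw [Finset.mem_convexHull']
  constructor
  · rintro ⟨w, h0, h1, rfl⟩
    constructor
    · intro v hv
      rw [H.val_comb ht w h1, if_pos hv]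
      exact h0 v hv
    · intro v hv
      rw [H.val_comb ht w h1, if_neg hv]
  · rintro ⟨h0, h1⟩
    obtain ⟨h2, h3⟩ := H.comb_of_zero ht h1
    exact ⟨fun v => c v p, h0, h2, h3⟩

theorem mem_affineSpan_iff (H : Coords s T c) (ht : t ⊆ s) {p : Euc N} :
    p ∈ affineSpan ℝ (t : Set (Euc N)) ↔ ∀ v, v ∉ t → c v p = 0 := by
  constructor
  · intro hp v hv
    refine affineSpan_induction (p := fun q => c v q = 0) hp ?_ ?_
    · intro x hx
      have hx' : x ∈ t := hx
      by_cases hvT : v ∈ T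
      · rw [H.val v hvT x (H.sub (ht hx')), if_neg]
        rintro rfl
        exact hv hx'
      · exact H.zero v hvT x
    · intro a u v' w h1 h2 h3
      have := (c v).map_vadd w (a • (u -ᵥ v'))
      rw [this, map_smul, AffineMap.linearMap_vsub, h1, h2, h3]
      simp
  · intro hp
    obtain ⟨h2, h3⟩ := H.comb_of_zero ht hp
    have := affineCombination_mem_affineSpan (k := ℝ) (s := (t.attach)) 
      (w := fun v => c v p) (by rw [Finset.sum_attach t (fun v => c v p)]; exact h2)
      (fun v : t => (v : Euc N))
    rw [Finset.affineCombination_eq_linear_combination _ _ _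
      (by rw [Finset.sum_attach t (fun v => c v p)]; exact h2),
      Finset.sum_attach t (fun v => c v p • v), h3] at this
    simpa using this

theorem continuous (v : Euc N) : Continuous (c v) := (c v).continuous_of_finiteDimensional

theorem mem_openSimplex_iff (H : Coords s T c) (ht : t ⊆ s) {p : Euc N} :
    p ∈ openSimplex t ↔ (∀ v ∈ t, 0 < c v p) ∧ ∀ v, v ∉ t → c v p = 0 := by
  unfold openSimplex
  rw [mem_intrinsicInterior]
  constructor
  · rintro ⟨y, hy, rfl⟩
    have hyc := (H.mem_convexHull_iff ht).1 (Set.mem_preimage.1 (interior_subset hy))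
    refine ⟨fun v hv => lt_of_le_of_ne (hyc.1 v hv) fun h0 => ?_, hyc.2⟩
    have hvs : v ∈ affineSpan ℝ (convexHull ℝ (t : Set (Euc N))) :=
      subset_affineSpan _ _ (subset_convexHull _ _ hv)
    let g : ℝ → affineSpan ℝ (convexHull ℝ (t : Set (Euc N))) := fun e =>
      ⟨AffineMap.lineMap (y : Euc N) v e, AffineMap.lineMap_mem e y.2 hvs⟩
    have hg : Continuous g := by
      refine Continuous.subtype_mk ?_ _
      exact AffineMap.lineMap_continuous
    have hg0 : g 0 = y := by
      apply Subtype.ext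
      simp [g]
    have hev : ∀ᶠ e in nhds (0 : ℝ), g e ∈ interior
        ((↑) ⁻¹' (convexHull ℝ (t : Set (Euc N))) :
          Set (affineSpan ℝ (convexHull ℝ (t : Set (Euc N))))) :=
      hg.continuousAt.eventually (by rw [hg0]; exact isOpen_interior.mem_nhds hy)
    have hev2 : ∀ᶠ e in nhdsWithin (0 : ℝ) (Set.Iio 0), g e ∈ interior
        ((↑) ⁻¹' (convexHull ℝ (t : Set (Euc N))) :
          Set (affineSpan ℝ (convexHull ℝ (t : Set (Euc N))))) := hev.filter_mono inf_le_left
    obtain ⟨e, he, hneg⟩ := (hev2.and self_mem_nhdsWithin).exists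
    have h1 := ((H.mem_convexHull_iff ht).1 (Set.mem_preimage.1 (interior_subset he))).1 v hv
    have h2 : c v (g e : Euc N) = e := by
      show c v (AffineMap.lineMap (y : Euc N) v e) = e
      rw [AffineMap.apply_lineMap, ← h0, H.val v (H.sub (ht hv)) v (H.sub (ht hv))]
      simp [AffineMap.lineMap_apply]
    rw [h2] at h1
    exact absurd h1 (not_le.2 hneg)
  · rintro ⟨h0, h1⟩
    have hpc : p ∈ convexHull ℝ (t : Set (Euc N)) :=
      (H.mem_convexHull_iff ht).2 ⟨fun v hv => (h0 v hv).le, h1⟩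
    refine ⟨⟨p, subset_affineSpan _ _ hpc⟩, ?_, rfl⟩
    rw [mem_interior_iff_mem_nhds]
    have : ∀ᶠ q in nhds p, ∀ v ∈ (t : Set (Euc N)), 0 < c v q := by
      rw [Filter.eventually_all_finite t.finite_toSet]
      intro v hv
      exact (Coords.continuous v).continuousAt.eventually (lt_mem_nhds (h0 v hv))
    have h2 := (continuous_subtype_val.continuousAt
      (x := (⟨p, subset_affineSpan _ _ hpc⟩ :
        affineSpan ℝ (convexHull ℝ (t : Set (Euc N)))))).eventually this
    filter_upwards [h2] with q hq
    refine (H.mem_convexHull_iff ht).2 ⟨fun v hv => (hq v hv).le, ?_⟩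
    exact (H.mem_affineSpan_iff ht).1 ((affineSpan_convexHull (𝕜 := ℝ) (t : Set (Euc N))).le q.2)

end Coords

theorem openSimplex_subset (s : Finset (Euc N)) :
    openSimplex s ⊆ convexHull ℝ (s : Set (Euc N)) := intrinsicInterior_subset

theorem isCompact_hull (s : Finset (Euc N)) : IsCompact (convexHull ℝ (s : Set (Euc N))) :=
  s.finite_toSet.isCompact_convexHull ℝ

theorem centroid_mem (s : Finset (Euc N)) (hs : AffineIndependent ℝ ((↑) : s → Euc N))
    (hne : s.Nonempty) : s.centroid ℝ id ∈ openSimplex s := by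
  obtain ⟨T, c, H⟩ := exists_coords s hs
  have hcard : (0 : ℝ) < s.card := by exact_mod_cast hne.card_pos
  have hw : ∑ y ∈ s, (s.card : ℝ)⁻¹ = 1 := by
    rw [Finset.sum_const, nsmul_eq_mul, mul_inv_cancel₀ hcard.ne']
  have : s.centroid ℝ id = ∑ y ∈ s, (s.card : ℝ)⁻¹ • y := by
    rw [Finset.centroid_def, Finset.affineCombination_eq_linear_combination]
    · simp [Finset.centroidWeights]
    · simpa [Finset.centroidWeights] using hw
  rw [this, H.mem_openSimplex_iff subset_rfl]
  constructor
  · intro v hv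
    rw [H.val_comb subset_rfl (fun _ => (s.card : ℝ)⁻¹) hw, if_pos hv]
    positivity
  · intro v hv
    rw [H.val_comb subset_rfl (fun _ => (s.card : ℝ)⁻¹) hw, if_neg hv]

/-- the closed simplex lies in the closure of the open simplex -/
theorem hull_subset_of_open_subset {s : Finset (Euc N)}
    (hs : AffineIndependent ℝ ((↑) : s → Euc N)) {A : Set (Euc N)} (hA : IsClosed A)
    (h : openSimplex s ⊆ A) : convexHull ℝ (s : Set (Euc N)) ⊆ A := by
  intro q hq
  have hne : s.Nonempty := by
    by_contra hne
    rw [Finset.not_nonempty_iff_eq_empty] at hne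
    simp [hne] at hq
  obtain ⟨T, c, H⟩ := exists_coords s hs
  have hc := (H.mem_openSimplex_iff subset_rfl).1 (centroid_mem s hs hne)
  have hq' := (H.mem_convexHull_iff subset_rfl).1 hq
  have hcont : Tendsto (fun e : ℝ => AffineMap.lineMap q (s.centroid ℝ id) e)
      (nhdsWithin 0 (Set.Ioi 0)) (nhds q) := by
    have : Continuous (fun e : ℝ => (AffineMap.lineMap q (s.centroid ℝ id) e : Euc N)) :=
      AffineMap.lineMap_continuous
    have h2 := this.tendsto 0
    simp only [AffineMap.lineMap_apply_zero] at h2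
    exact h2.mono_left inf_le_left
  refine hA.mem_of_tendsto hcont ?_
  have : Set.Ioo (0 : ℝ) 1 ∈ nhdsWithin (0 : ℝ) (Set.Ioi 0) := Ioo_mem_nhdsGT one_pos
  filter_upwards [this] with e he
  apply h
  rw [H.mem_openSimplex_iff subset_rfl]
  constructor
  · intro v hv
    rw [AffineMap.apply_lineMap, AffineMap.lineMap_apply]
    have h1 := hc.1 v hv
    have h2 := hq'.1 v hv
    simp only [vsub_eq_sub, smul_eq_mul, vadd_eq_add]
    nlinarith [mul_pos he.1 h1, mul_nonneg (sub_nonneg.2 he.2.le) h2]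
  · intro v hv
    rw [AffineMap.apply_lineMap, hq'.2 v hv, hc.2 v hv]
    simp

/-! ### Incidence in a simplicial complex -/

theorem subset_of_mem (K : SimplicialComplex ℝ (Euc N)) {s t : Finset (Euc N)}
    (hs : s ∈ K.faces) (ht : t ∈ K.faces) {x : Euc N} (hx : x ∈ openSimplex s)
    (hxt : x ∈ convexHull ℝ (t : Set (Euc N))) : s ⊆ t := by
  intro v hv
  by_contra hvt
  obtain ⟨T, c, H⟩ := exists_coords s (K.indep hs)
  have h1 := K.inter_subset_convexHull hs ht ⟨openSimplex_subset s hx, hxt⟩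
  rw [← Finset.coe_inter, H.mem_convexHull_iff Finset.inter_subset_left] at h1
  have h2 := h1.2 v (fun h => hvt (Finset.mem_inter.1 h).2)
  have h3 := ((H.mem_openSimplex_iff subset_rfl).1 hx).1 v hv
  linarith

theorem eq_of_mem_open (K : SimplicialComplex ℝ (Euc N)) {s t : Finset (Euc N)}
    (hs : s ∈ K.faces) (ht : t ∈ K.faces) {x : Euc N} (hx : x ∈ openSimplex s)
    (hxt : x ∈ openSimplex t) : s = t :=
  (subset_of_mem K hs ht hx (openSimplex_subset t hxt)).antisymm
    (subset_of_mem K ht hs hxt (openSimplex_subset s hx))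

theorem exists_open_of_mem_space (K : SimplicialComplex ℝ (Euc N)) {x : Euc N}
    (hx : x ∈ K.space) : ∃ s ∈ K.faces, x ∈ openSimplex s := by
  obtain ⟨t, ht, hxt⟩ := SimplicialComplex.mem_space_iff.1 hx
  obtain ⟨T, c, H⟩ := exists_coords t (K.indep ht)
  have h := (H.mem_convexHull_iff subset_rfl).1 hxt
  have hsub : (t.filter fun v => 0 < c v x) ⊆ t := Finset.filter_subset _ _
  have hmem : x ∈ openSimplex (t.filter fun v => 0 < c v x) := by
    rw [H.mem_openSimplex_iff hsub]
    refine ⟨fun v hv => (Finset.mem_filter.1 hv).2, fun v hv => ?_⟩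
    by_cases hvt : v ∈ t
    · have h1 : ¬ 0 < c v x := fun h' => hv (Finset.mem_filter.2 ⟨hvt, h'⟩)
      exact le_antisymm (not_lt.1 h1) (h.1 v hvt)
    · exact h.2 v hvt
  refine ⟨_, K.down_closed ht hsub ?_, hmem⟩
  by_contra hne
  rw [Finset.not_nonempty_iff_eq_empty] at hne
  rw [hne] at hmem
  simp [openSimplex] at hmem

/-- near a point of an open simplex `s`, only closed simplices having `s` as a face occur -/
theorem eventually_subset (K : SimplicialComplex ℝ (Euc N)) (hK : K.faces.Finite)
    {s : Finset (Euc N)} (hs : s ∈ K.faces) {x : Euc N} (hx : x ∈ openSimplex s) :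
    ∀ᶠ p in nhds x, ∀ t ∈ K.faces, p ∈ convexHull ℝ (t : Set (Euc N)) → s ⊆ t := by
  rw [Filter.eventually_all_finite hK]
  intro t ht
  by_cases hst : s ⊆ t
  · exact Filter.Eventually.of_forall fun _ _ => hst
  · have : x ∉ convexHull ℝ (t : Set (Euc N)) := fun h => hst (subset_of_mem K hs ht hx h)
    filter_upwards [(isCompact_hull t).isClosed.isOpen_compl.mem_nhds this] with p hp hpt
    exact absurd hpt hp

/-- The germ of a simplex along an open face is translation invariant. -/
theorem germ_simplex {s t : Finset (Euc N)} (ht : AffineIndependent ℝ ((↑) : t → Euc N))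
    (hst : s ⊆ t) {x y : Euc N} (hx : x ∈ openSimplex s) (hy : y ∈ openSimplex s) :
    ∀ᶠ v in nhds (0 : Euc N), x + v ∈ convexHull ℝ (t : Set (Euc N)) →
      y + v ∈ convexHull ℝ (t : Set (Euc N)) := by
  obtain ⟨T, c, H⟩ := exists_coords t ht
  have hx' := (H.mem_openSimplex_iff hst).1 hx
  have hy' := (H.mem_openSimplex_iff hst).1 hy
  have : ∀ᶠ v in nhds (0 : Euc N), ∀ i ∈ (s : Set (Euc N)), 0 < c i (y + v) := by
    rw [Filter.eventually_all_finite s.finite_toSet]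
    intro i hi
    have hc : Continuous fun v => c i (y + v) :=
      (Coords.continuous i).comp (continuous_const.add continuous_id)
    refine hc.continuousAt.eventually (lt_mem_nhds ?_)
    simpa using hy'.1 i hi
  have hadd : ∀ i p (v : Euc N), c i (p + v) = (c i).linear v + c i p := fun i p v => by
    rw [add_comm p v]
    exact (c i).map_vadd p v
  filter_upwards [this] with v hv hxv
  rw [H.mem_convexHull_iff subset_rfl] at hxv ⊢
  have key : ∀ i, i ∉ s → c i (y + v) = c i (x + v) := fun i hi => by
    rw [hadd, hadd, hx'.2 i hi, hy'.2 i hi]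
  constructor
  · intro i hi
    by_cases his : i ∈ s
    · exact (hv i his).le
    · rw [key i his]
      exact hxv.1 i hi
  · intro i hi
    rw [key i (fun h => hi (hst h))]
    exact hxv.2 i hi

theorem germ_space (K : SimplicialComplex ℝ (Euc N)) (hK : K.faces.Finite)
    {s : Finset (Euc N)} (hs : s ∈ K.faces) {x y : Euc N} (hx : x ∈ openSimplex s)
    (hy : y ∈ openSimplex s) :
    ∀ᶠ v in nhds (0 : Euc N), x + v ∈ K.space → y + v ∈ K.space := by
  have h1 : ∀ᶠ v in nhds (0 : Euc N), ∀ t ∈ K.faces,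
      x + v ∈ convexHull ℝ (t : Set (Euc N)) → s ⊆ t := by
    have hc : Continuous fun v : Euc N => x + v := continuous_const.add continuous_id
    have := hc.tendsto 0
    rw [add_zero] at this
    exact this.eventually (eventually_subset K hK hs hx)
  have h2 : ∀ᶠ v in nhds (0 : Euc N), ∀ t ∈ K.faces, s ⊆ t →
      x + v ∈ convexHull ℝ (t : Set (Euc N)) → y + v ∈ convexHull ℝ (t : Set (Euc N)) := by
    rw [Filter.eventually_all_finite hK]
    intro t ht
    by_cases hst : s ⊆ t
    · filter_upwards [germ_simplex (K.indep ht) hst hx hy] with v hv _ using hv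
    · exact Filter.Eventually.of_forall fun v h => absurd h hst
  filter_upwards [h1, h2] with v hv1 hv2 hxv
  rw [SimplicialComplex.mem_space_iff] at hxv ⊢
  obtain ⟨t, ht, hxt⟩ := hxv
  exact ⟨t, ht, hv2 t ht (hv1 t ht hxt) hxt⟩

/-! ### Cone neighborhoods -/

theorem zero_mem_Tcone (r : ℕ) : (0 : ℝ × ℝ) ∈ Tcone r := Or.inl rfl

theorem mem_Tcone_cases {r : ℕ} {p : ℝ × ℝ} (hp : p ∈ Tcone r) :
    p = 0 ∨ ∃ k ∈ Finset.range r, ∃ t : ℝ, 0 ≤ t ∧ t < 1 ∧ p = t • ((1 : ℝ), (k : ℝ)) := by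
  rcases hp with hp | hp
  · exact Or.inl hp
  · simp only [Set.mem_iUnion] at hp
    obtain ⟨k, hk, h⟩ := hp
    exact Or.inr ⟨k, hk, h⟩

theorem mem_Tcone_of {r : ℕ} {p : ℝ × ℝ} (k : ℕ) (hk : k ∈ Finset.range r) (t : ℝ) (h0 : 0 ≤ t)
    (h1 : t < 1) (hp : p = t • ((1 : ℝ), (k : ℝ))) : p ∈ Tcone r := by
  right
  simp only [Set.mem_iUnion]
  exact ⟨k, hk, t, h0, h1, hp⟩

theorem norm_Tcone {r : ℕ} {p : ℝ × ℝ} (hp : p ∈ Tcone r) : ‖p‖ ≤ r + 1 := by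
  rcases mem_Tcone_cases hp with rfl | ⟨k, hk, t, h0, h1, rfl⟩
  · rw [norm_zero]
    positivity
  · rw [norm_smul, Real.norm_of_nonneg h0]
    have hk' : (k : ℝ) ≤ r := by exact_mod_cast (Finset.mem_range.1 hk).le
    have hk0 : (0 : ℝ) ≤ k := Nat.cast_nonneg k
    have : ‖((1 : ℝ), (k : ℝ))‖ ≤ r + 1 := by
      rw [Prod.norm_def, Real.norm_of_nonneg zero_le_one, Real.norm_of_nonneg hk0]
      exact max_le (by linarith) (by linarith)
    nlinarith [norm_nonneg ((1 : ℝ), (k : ℝ))]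

theorem smul_mem_Tcone {r : ℕ} {e : ℝ} (he : 0 < e) (he1 : e ≤ 1) {p : ℝ × ℝ}
    (hp : p ∈ Tcone r) : e • p ∈ Tcone r := by
  rcases mem_Tcone_cases hp with rfl | ⟨k, hk, t, h0, h1, rfl⟩
  · rw [smul_zero]
    exact zero_mem_Tcone r
  · exact mem_Tcone_of k hk (e * t) (by positivity) (by nlinarith) (by rw [smul_smul])

/-- Scaling of the open cone. -/
def scaleT (r : ℕ) (e : ℝ) (he : 0 < e) (he1 : e ≤ 1) : Tcone r → Tcone r :=
  fun p => ⟨e • (p : ℝ × ℝ), smul_mem_Tcone he he1 p.2⟩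

theorem isOpenEmbedding_scaleT (r : ℕ) (e : ℝ) (he : 0 < e) (he1 : e ≤ 1) :
    Topology.IsOpenEmbedding (scaleT r e he he1) := by
  refine ⟨?_, ?_⟩
  · have h1 : Topology.IsEmbedding (fun p : Tcone r => e • (p : ℝ × ℝ)) :=
      (Homeomorph.smulOfNeZero e he.ne').isEmbedding.comp Topology.IsEmbedding.subtypeVal
    exact Topology.IsEmbedding.of_comp (by
      refine Continuous.subtype_mk ?_ _
      exact h1.continuous) continuous_subtype_val h1
  · have : Set.range (scaleT r e he he1) = {p : Tcone r | (p : ℝ × ℝ).1 < e} := by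
      ext p
      constructor
      · rintro ⟨q, rfl⟩
        show e * (q : ℝ × ℝ).1 < e
        rcases mem_Tcone_cases q.2 with h | ⟨k, hk, t, h0, h1, h⟩
        · rw [h]
          simpa using he
        · rw [h]
          show e * (t * 1) < e
          nlinarith
      · intro hp
        have hp' : (p : ℝ × ℝ).1 < e := hp
        rcases mem_Tcone_cases p.2 with h | ⟨k, hk, t, h0, h1, h⟩
        · refine ⟨⟨0, zero_mem_Tcone r⟩, Subtype.ext ?_⟩
          rw [h]
          exact smul_zero e
        · rw [h] at hp'
          have hte : t < e := by simpa using hp'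
          refine ⟨⟨(t / e) • ((1 : ℝ), (k : ℝ)), mem_Tcone_of k hk (t / e) (by positivity)
            ((div_lt_one he).2 hte) rfl⟩, Subtype.ext ?_⟩
          rw [h]
          show e • ((t / e) • ((1 : ℝ), (k : ℝ))) = _
          rw [smul_smul, mul_div_cancel₀ _ he.ne']
    rw [this]
    exact isOpen_lt (continuous_fst.comp continuous_subtype_val) continuous_const

theorem HasConeNbhd.shrink {n r : ℕ} {S : Set (Euc N)} {x : Euc N} (hxS : x ∈ S)
    (h : HasConeNbhd n r S x) {V : Set (Euc N)} (hV : V ∈ nhds x) :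
    ∃ U : Set (Euc N), U ∈ nhdsWithin x S ∧ U ⊆ S ∧ U ⊆ V ∧
    ∃ h : U ≃ₜ (Tcone r) × EuclideanSpace ℝ (Fin (n - 1)),
      ∀ hx : x ∈ U, ((h ⟨x, hx⟩).1 : ℝ × ℝ) = 0 := by
  obtain ⟨U, hU, hUS, h, hh⟩ := h
  have hxU : x ∈ U := mem_of_mem_nhdsWithin hxS hU
  set a := h ⟨x, hxU⟩ with ha
  have ha1 : a.1 = ⟨0, zero_mem_Tcone r⟩ := Subtype.ext (hh hxU)
  let g : (Tcone r) × EuclideanSpace ℝ (Fin (n - 1)) → Euc N := fun q => (h.symm q : Euc N)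
  have hgc : Continuous g := continuous_subtype_val.comp h.symm.continuous
  have hga : g a = x := by simp [g, ha]
  have hpre : g ⁻¹' V ∈ nhds a := hgc.continuousAt.preimage_mem_nhds (by rw [hga]; exact hV)
  obtain ⟨d, hd, hball⟩ := Metric.mem_nhds_iff.1 hpre
  obtain ⟨e, he, he1, hed, her⟩ : ∃ e : ℝ, 0 < e ∧ e ≤ 1 ∧ e ≤ d ∧ e * (r + 1) < d := by
    refine ⟨min 1 (d / (r + 2)), by positivity, min_le_left _ _, ?_, ?_⟩
    · refine (min_le_right _ _).trans (div_le_self hd.le ?_)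
      have : (0 : ℝ) ≤ r := Nat.cast_nonneg r
      linarith
    · have hr : (0 : ℝ) ≤ r := Nat.cast_nonneg r
      calc min 1 (d / (r + 2)) * (r + 1) ≤ d / (r + 2) * (r + 1) := by
            gcongr
            exact min_le_right _ _
        _ < d / (r + 2) * (r + 2) := by
            gcongr
            linarith
        _ = d := by field_simp
  let ub := OpenPartialHomeomorph.univBall a.2 e
  have hub : Topology.IsOpenEmbedding ub :=
    ub.isOpenEmbedding (OpenPartialHomeomorph.univBall_source a.2 e)
  have hφ : Topology.IsOpenEmbedding (Prod.map (scaleT r e he he1) ub) :=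
    (isOpenEmbedding_scaleT r e he he1).prodMap hub
  have hψ : Topology.IsOpenEmbedding (h.symm ∘ Prod.map (scaleT r e he he1) ub) :=
    h.symm.isOpenEmbedding.comp hφ
  have hf : Topology.IsEmbedding
      ((↑) ∘ (h.symm ∘ Prod.map (scaleT r e he he1) ub) : _ → Euc N) :=
    Topology.IsEmbedding.subtypeVal.comp hψ.isEmbedding
  have hz : (h.symm ∘ Prod.map (scaleT r e he he1) ub) (⟨0, zero_mem_Tcone r⟩, 0)
      = ⟨x, hxU⟩ := by
    have : Prod.map (scaleT r e he he1) ub (⟨0, zero_mem_Tcone r⟩, 0) = a := by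
      refine Prod.ext ?_ ?_
      · rw [ha1]
        exact Subtype.ext (smul_zero e)
      · exact OpenPartialHomeomorph.univBall_apply_zero a.2 e
    rw [Function.comp_apply, this, ha, Homeomorph.symm_apply_apply]
  refine ⟨Set.range ((↑) ∘ (h.symm ∘ Prod.map (scaleT r e he he1) ub) : _ → Euc N),
    ?_, ?_, ?_, hf.toHomeomorph.symm, ?_⟩
  · have hN : nhdsWithin x S = nhdsWithin x U := by
      apply le_antisymm
      · exact nhdsWithin_le_iff.2 hU
      · exact nhdsWithin_mono x hUS
    rw [hN, Set.range_comp, ← map_nhds_subtype_val ⟨x, hxU⟩]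
    exact image_mem_map (hψ.isOpen_range.mem_nhds ⟨_, hz⟩)
  · rintro _ ⟨q, rfl⟩
    exact hUS (Subtype.coe_prop _)
  · rintro _ ⟨q, rfl⟩
    refine hball (?_ : Prod.map (scaleT r e he he1) ub q ∈ Metric.ball a d)
    rw [Metric.mem_ball, Prod.dist_eq, max_lt_iff]
    constructor
    · rw [ha1]
      show dist (e • (q.1 : ℝ × ℝ)) 0 < d
      rw [dist_zero_right, norm_smul, Real.norm_of_nonneg he.le]
      have := norm_Tcone q.1.2
      nlinarith
    · have : ub q.2 ∈ Metric.ball a.2 e := by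
        rw [← OpenPartialHomeomorph.univBall_target a.2 he]
        exact ub.map_source (by rw [OpenPartialHomeomorph.univBall_source]; trivial)
      exact (Metric.mem_ball.1 this).trans_le hed
  · intro hx
    have hz' : ((h.symm ∘ Prod.map (scaleT r e he he1) ub) (⟨0, zero_mem_Tcone r⟩, 0) : Euc N)
        = x := congrArg Subtype.val hz
    have : hf.toHomeomorph (⟨0, zero_mem_Tcone r⟩, 0) = ⟨x, hx⟩ := Subtype.ext hz'
    rw [← this, Homeomorph.symm_apply_apply]

theorem HasConeNbhd.translate {n r : ℕ} {S : Set (Euc N)} {x y : Euc N} (hxS : x ∈ S)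
    (h1 : ∀ᶠ v in nhds (0 : Euc N), x + v ∈ S → y + v ∈ S)
    (h2 : ∀ᶠ v in nhds (0 : Euc N), y + v ∈ S → x + v ∈ S)
    (h : HasConeNbhd n r S x) : HasConeNbhd n r S y := by
  have t1 : Tendsto (fun p : Euc N => p - x) (nhds x) (nhds 0) := by
    have : Continuous fun p : Euc N => p - x := continuous_id.sub continuous_const
    simpa using this.tendsto x
  have t2 : Tendsto (fun p : Euc N => p - y) (nhds y) (nhds 0) := by
    have : Continuous fun p : Euc N => p - y := continuous_id.sub continuous_const
    simpa using this.tendsto y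
  have t3 : Tendsto (fun p : Euc N => x + (p - y)) (nhds y) (nhds x) := by
    have : Continuous fun p : Euc N => x + (p - y) := by fun_prop
    simpa using this.tendsto y
  obtain ⟨U, hU, hUS, hUV, h, hh⟩ := h.shrink hxS (t1.eventually h1)
  let E : Euc N ≃ₜ Euc N := Homeomorph.addRight (y - x)
  have hE : ∀ p, E p = p + (y - x) := fun p => rfl
  refine ⟨E '' U, ?_, ?_, (E.image U).symm.trans h, ?_⟩
  · rw [mem_nhdsWithin_iff_eventually] at hU ⊢
    filter_upwards [t3.eventually hU, t2.eventually h2] with p hp1 hp2 hpS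
    refine ⟨_, hp1 (hp2 (by rwa [add_sub_cancel])), ?_⟩
    rw [hE]
    abel
  · rintro _ ⟨p, hp, rfl⟩
    have := hUV hp
    simp only [Set.mem_ofPred_eq, add_sub_cancel] at this
    rw [hE, show p + (y - x) = y + (p - x) by abel]
    exact this (hUS hp)
  · intro hy
    have hxU : x ∈ U := mem_of_mem_nhdsWithin hxS hU
    have : (E.image U) ⟨x, hxU⟩ = ⟨y, hy⟩ := by
      apply Subtype.ext
      show E x = y
      rw [hE, add_sub_cancel]
    rw [Homeomorph.trans_apply, ← this, Homeomorph.symm_apply_apply]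
    exact hh hxU

theorem csetAux_homog (n r : ℕ) (K : SimplicialComplex ℝ (Euc N)) (hK : K.faces.Finite)
    {s : Finset (Euc N)} (hs : s ∈ K.faces) {x y : Euc N} (hx : x ∈ openSimplex s)
    (hy : y ∈ openSimplex s) (h : x ∈ csetAux n K r) : y ∈ csetAux n K r :=
  ⟨SimplicialComplex.convexHull_subset_space hs (openSimplex_subset s hy),
    h.2.translate h.1 (germ_space K hK hs hx hy) (germ_space K hK hs hy hx)⟩

theorem strRank_subdivision {n : ℕ} (K L : SimplicialComplex ℝ (Euc N))
    (hKfin : K.faces.Finite) (hsub : IsSubdivision K L)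
    (ν μ : Finset (Euc N)) (hν : ν ∈ L.faces) (hμ : μ ∈ K.faces)
    (hcont : openSimplex ν ⊆ openSimplex μ) : strRank n L ν = strRank n K μ := by
  have hLK : ∀ r, csetAux n L r = csetAux n K r := fun r => by
    unfold csetAux
    rw [hsub.1]
  have hx := centroid_mem ν (L.indep hν) (SimplicialComplex.nonempty_of_mem_faces hν)
  have key : ∀ r, (openSimplex ν ⊆ csetAux n L r) = (openSimplex μ ⊆ csetAux n K r) := by
    intro r
    rw [hLK r]
    refine propext ⟨fun h y hy => csetAux_homog n r K hKfin hμ (hcont hx) hy (h hx),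
      fun h => hcont.trans h⟩
  unfold strRank
  simp only [key]

/-! ### Solid angles -/

/-- Thickening of a set in the directions orthogonal to `V`. -/
def thick (V : Submodule ℝ (Euc N)) (A : Set (Euc N)) : Set (Euc N) :=
  {y : Euc N | ∃ c ∈ A, ∃ w ∈ Vᗮ, y = c + w}

/-- The thickened simplex. -/
abbrev thickS (σ : Finset (Euc N)) : Set (Euc N) :=
  thick (vectorSpan ℝ (σ : Set (Euc N))) (convexHull ℝ (σ : Set (Euc N)))

/-- The fraction of the ball lying in the thickened simplex. -/
def ratio (x : Euc N) (σ : Finset (Euc N)) (ε : ℝ) : ℝ :=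
  (volume (Metric.ball x ε ∩ thickS σ)).toReal / (volume (Metric.ball x ε)).toReal

theorem isClosed_thickS (σ : Finset (Euc N)) : IsClosed (thickS σ) := by
  have h := (vectorSpan ℝ (σ : Set (Euc N)))ᗮ.closed_of_finiteDimensional.add_left_of_isCompact
    (isCompact_hull σ)
  convert h using 1
  ext y
  simp only [thickS, thick, Set.mem_add]
  constructor
  · rintro ⟨c, hc, w, hw, rfl⟩
    exact ⟨c, hc, w, hw, rfl⟩
  · rintro ⟨c, hc, w, hw, rfl⟩
    exact ⟨c, hc, w, hw, rfl⟩

theorem mem_thick_iff {V : Submodule ℝ (Euc N)} {Q : AffineSubspace ℝ (Euc N)}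
    (hQ : Q.direction = V) {A : Set (Euc N)} (hA : A ⊆ Q) {x v : Euc N} (hx : x ∈ Q) :
    x + v ∈ thick V A ↔ x + V.starProjection v ∈ A := by
  constructor
  · rintro ⟨c, hc, w, hw, h⟩
    have h1 : c - x ∈ V := by
      rw [← hQ]
      exact AffineSubspace.vsub_mem_direction (hA hc) hx
    have h2 : V.starProjection v = c - x := by
      refine Submodule.eq_starProjection_of_mem_orthogonal h1 ?_
      have : v - (c - x) = w := by
        rw [sub_sub_eq_add_sub, add_comm v x, h, add_sub_cancel_left]
      rwa [this]
    rw [h2, add_sub_cancel]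
    exact hc
  · intro h
    refine ⟨_, h, v - V.starProjection v, Submodule.sub_starProjection_mem_orthogonal v, ?_⟩
    abel

theorem hull_subset_affineSpan (σ : Finset (Euc N)) :
    convexHull ℝ (σ : Set (Euc N)) ⊆ affineSpan ℝ (σ : Set (Euc N)) :=
  convexHull_subset_affineSpan _

theorem exists_cone {η σ : Finset (Euc N)} (hσ : AffineIndependent ℝ ((↑) : σ → Euc N))
    (hησ : η ⊆ σ) : ∃ C : Set (Euc N), (∀ e : ℝ, 0 < e → ∀ v, e • v ∈ C ↔ v ∈ C) ∧
      ∀ x ∈ openSimplex η, ∀ᶠ v in nhds (0 : Euc N), (x + v ∈ thickS σ ↔ v ∈ C) := by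
  obtain ⟨T, c, H⟩ := exists_coords σ hσ
  let V := vectorSpan ℝ (σ : Set (Euc N))
  refine ⟨{v | ∀ i ∈ σ, i ∉ η → 0 ≤ (c i).linear (V.starProjection v)}, ?_, ?_⟩
  · intro e he v
    simp only [Set.mem_ofPred_eq, map_smul, smul_eq_mul, mul_nonneg_iff_of_pos_left he]
  · intro x hx
    have hx' := (H.mem_openSimplex_iff hησ).1 hx
    have hxσ : x ∈ affineSpan ℝ (σ : Set (Euc N)) :=
      hull_subset_affineSpan σ (convexHull_mono (by exact_mod_cast hησ) (openSimplex_subset η hx))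
    have hadd : ∀ i p (v : Euc N), c i (p + v) = (c i).linear v + c i p := fun i p v => by
      rw [add_comm p v]
      exact (c i).map_vadd p v
    have hev : ∀ᶠ v in nhds (0 : Euc N), ∀ i ∈ (η : Set (Euc N)),
        0 < c i (x + V.starProjection v) := by
      rw [Filter.eventually_all_finite η.finite_toSet]
      intro i hi
      have hc : Continuous fun v => c i (x + V.starProjection v) :=
        (Coords.continuous i).comp (continuous_const.add V.starProjection.continuous)
      refine hc.continuousAt.eventually (lt_mem_nhds ?_)
      simpa using hx'.1 i hi
    filter_upwards [hev] with v hv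
    rw [mem_thick_iff (direction_affineSpan ℝ _) (hull_subset_affineSpan σ) hxσ,
      H.mem_convexHull_iff subset_rfl]
    constructor
    · rintro ⟨h1, -⟩ i hi hiη
      have := h1 i hi
      rwa [hadd, hx'.2 i hiη, add_zero] at this
    · intro h
      constructor
      · intro i hi
        by_cases hiη : i ∈ η
        · exact (hv i hiη).le
        · have := h i hi hiη
          rwa [hadd, hx'.2 i hiη, add_zero]
      · refine (H.mem_affineSpan_iff subset_rfl).1 ?_
        rw [add_comm]
        refine AffineSubspace.vadd_mem_of_mem_direction ?_ hxσ
        rw [direction_affineSpan]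
        exact V.starProjection_apply_mem v

theorem volume_cone {C A : Set (Euc N)} (hC : ∀ e : ℝ, 0 < e → ∀ v, e • v ∈ C ↔ v ∈ C)
    {x : Euc N} {ε : ℝ} (hε : 0 < ε) (h : ∀ v ∈ Metric.ball (0 : Euc N) ε, x + v ∈ A ↔ v ∈ C) :
    volume (Metric.ball x ε ∩ A) = ENNReal.ofReal |ε ^ Module.finrank ℝ (Euc N)| *
      volume (Metric.ball (0 : Euc N) 1 ∩ C) := by
  rw [← Measure.addHaar_smul, ← measure_preimage_add volume x]
  congr 1
  ext v
  rw [Set.mem_smul_set_iff_inv_smul_mem₀ hε.ne']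
  have hb : x + v ∈ Metric.ball x ε ↔ v ∈ Metric.ball (0 : Euc N) ε := by
    simp [Metric.mem_ball, dist_eq_norm]
  have hb2 : ε⁻¹ • v ∈ Metric.ball (0 : Euc N) 1 ↔ v ∈ Metric.ball (0 : Euc N) ε := by
    rw [mem_ball_zero_iff, mem_ball_zero_iff, norm_smul, norm_inv, Real.norm_of_nonneg hε.le,
      inv_mul_lt_one₀ hε]
  rw [Set.mem_preimage, Set.mem_inter_iff, Set.mem_inter_iff, hb, hb2, hC _ (inv_pos.2 hε)]
  constructor
  · rintro ⟨h1, h2⟩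
    exact ⟨h1, (h v h1).1 h2⟩
  · rintro ⟨h1, h2⟩
    exact ⟨h1, (h v h1).2 h2⟩

theorem eventually_ball {p : Euc N → Prop} {x : Euc N} (h : ∀ᶠ v in nhds x, p v) :
    ∀ᶠ ε in nhdsWithin (0 : ℝ) (Set.Ioi 0), ∀ v ∈ Metric.ball x ε, p v := by
  obtain ⟨d, hd, hball⟩ := Metric.eventually_nhds_iff_ball.1 h
  filter_upwards [Ioo_mem_nhdsGT hd] with ε hε v hv
  exact hball v (Metric.ball_subset_ball hε.2.le hv)

theorem ratio_eventually {η σ : Finset (Euc N)} (hσ : AffineIndependent ℝ ((↑) : σ → Euc N))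
    (hησ : η ⊆ σ) : ∃ a : ℝ, ∀ x ∈ openSimplex η,
      ∀ᶠ ε in nhdsWithin (0 : ℝ) (Set.Ioi 0), ratio x σ ε = a := by
  obtain ⟨C, hC, hx⟩ := exists_cone hσ hησ
  refine ⟨(volume (Metric.ball (0 : Euc N) 1 ∩ C)).toReal /
    (volume (Metric.ball (0 : Euc N) 1)).toReal, fun x hxη => ?_⟩
  filter_upwards [eventually_ball (hx x hxη), self_mem_nhdsWithin] with ε hε hpos
  have hpos' : 0 < ε := hpos
  have h1 := volume_cone hC hpos' hε
  have h2 := volume_cone (C := Set.univ) (A := Set.univ) (x := x) (fun _ _ _ => by simp) hpos'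
    (fun _ _ => by simp)
  rw [Set.inter_univ, Set.inter_univ] at h2
  unfold ratio
  rw [h1, h2, ENNReal.toReal_mul, ENNReal.toReal_mul, mul_div_mul_left]
  rw [ENNReal.toReal_ofReal (abs_nonneg _)]
  positivity

theorem solidAngle_eq {η σ : Finset (Euc N)} (hσ : AffineIndependent ℝ ((↑) : σ → Euc N))
    (hησ : η ⊆ σ) (hne : η.Nonempty) {x : Euc N} (hx : x ∈ openSimplex η) :
    ∀ᶠ ε in nhdsWithin (0 : ℝ) (Set.Ioi 0), ratio x σ ε = solidAngle η σ := by
  obtain ⟨a, ha⟩ := ratio_eventually hσ hησ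
  have hη : AffineIndependent ℝ ((↑) : η → Euc N) := hσ.mono (by exact_mod_cast hησ)
  have : solidAngle η σ = a := by
    refine Tendsto.limUnder_eq ?_
    have h1 := ha _ (centroid_mem η hη hne)
    exact (tendsto_congr' h1).2 tendsto_const_nhds
  rw [this]
  exact ha x hx

theorem finrank_simplex {σ : Finset (Euc N)} (hσ : AffineIndependent ℝ ((↑) : σ → Euc N)) {n : ℕ}
    (h : σ.card = n + 1) : Module.finrank ℝ (vectorSpan ℝ (σ : Set (Euc N))) = n := by
  have h1 := hσ.finrank_vectorSpan (n := n) (by simpa using h)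
  have h2 : Set.range ((↑) : σ → Euc N) = (σ : Set (Euc N)) := Subtype.range_coe
  rwa [h2] at h1

theorem volume_thick_affineSpan {s τ : Finset (Euc N)}
    (hτ : AffineIndependent ℝ ((↑) : τ → Euc N)) (hcard : s.card < τ.card) :
    volume (thick (vectorSpan ℝ (τ : Set (Euc N))) (affineSpan ℝ (s : Set (Euc N)))) = 0 := by
  rcases s.eq_empty_or_nonempty with rfl | ⟨p, hp⟩
  · simp [thick]
  set V := vectorSpan ℝ (τ : Set (Euc N)) with hV
  set D := vectorSpan ℝ (s : Set (Euc N)) with hD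
  have hs1 : 0 < s.card := Finset.card_pos.2 ⟨p, hp⟩
  have hfD : Module.finrank ℝ D ≤ s.card - 1 := by
    have := finrank_vectorSpan_image_finset_le ℝ (id : Euc N → Euc N) s
      (n := s.card - 1) (by omega)
    rwa [Finset.image_id] at this
  have hfV : Module.finrank ℝ V = τ.card - 1 :=
    finrank_simplex hτ (by omega)
  have hsub : thick V (affineSpan ℝ (s : Set (Euc N))) ⊆
      (AffineSubspace.mk' p (D ⊔ Vᗮ) : Set (Euc N)) := by
    rintro y ⟨c, hc, w, hw, rfl⟩
    show c + w ∈ AffineSubspace.mk' p (D ⊔ Vᗮ)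
    rw [AffineSubspace.mem_mk', vsub_eq_sub, add_sub_right_comm]
    refine Submodule.add_mem_sup ?_ hw
    rw [hD, ← direction_affineSpan]
    exact AffineSubspace.vsub_mem_direction hc (subset_affineSpan _ _ hp)
  refine measure_mono_null hsub (Measure.addHaar_affineSubspace _ _ fun htop => ?_)
  have h1 : D ⊔ Vᗮ = ⊤ := by
    rw [← AffineSubspace.direction_mk' p (D ⊔ Vᗮ), htop, AffineSubspace.direction_top]
  have h2 := Submodule.finrank_add_le_finrank_add_finrank D Vᗮ
  rw [h1, finrank_top] at h2
  have h3 := V.finrank_add_finrank_orthogonal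
  omega

theorem vectorSpan_le_of_hull {σ τ : Finset (Euc N)}
    (h : convexHull ℝ (σ : Set (Euc N)) ⊆ convexHull ℝ (τ : Set (Euc N))) :
    affineSpan ℝ (σ : Set (Euc N)) ≤ affineSpan ℝ (τ : Set (Euc N)) :=
  affineSpan_le.2 (((subset_convexHull ℝ _).trans h).trans (hull_subset_affineSpan τ))

theorem card_le_of_hull {σ τ : Finset (Euc N)} (hσ : AffineIndependent ℝ ((↑) : σ → Euc N))
    (h : convexHull ℝ (σ : Set (Euc N)) ⊆ convexHull ℝ (τ : Set (Euc N))) :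
    σ.card ≤ τ.card :=
  hσ.card_le_card_of_subset_affineSpan
    (((subset_convexHull ℝ _).trans h).trans (hull_subset_affineSpan τ))

theorem vectorSpan_eq_of_hull {σ τ : Finset (Euc N)}
    (hσ : AffineIndependent ℝ ((↑) : σ → Euc N)) (hτ : AffineIndependent ℝ ((↑) : τ → Euc N))
    (h : convexHull ℝ (σ : Set (Euc N)) ⊆ convexHull ℝ (τ : Set (Euc N))) {n : ℕ}
    (h1 : σ.card = n + 1) (h2 : τ.card = n + 1) :
    vectorSpan ℝ (σ : Set (Euc N)) = vectorSpan ℝ (τ : Set (Euc N)) := by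
  have e1 : Module.finrank ℝ (vectorSpan ℝ (σ : Set (Euc N))) = n :=
    finrank_simplex hσ h1
  have e2 : Module.finrank ℝ (vectorSpan ℝ (τ : Set (Euc N))) = n :=
    finrank_simplex hτ h2
  refine Submodule.eq_of_le_of_finrank_eq ?_ (e1.trans e2.symm)
  rw [← direction_affineSpan, ← direction_affineSpan]
  exact AffineSubspace.direction_le (vectorSpan_le_of_hull h)

theorem volume_fiber {n : ℕ} (K L : SimplicialComplex ℝ (Euc N))
    (hLfin : L.faces.Finite) (hsub : IsSubdivision K L) {ν τ : Finset (Euc N)} (hν : ν ∈ L.faces) (hτ : τ ∈ K.faces)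
    (hτcard : τ.card = n + 1) {x : Euc N} (hx : x ∈ openSimplex ν)
    (hxτ : x ∈ convexHull ℝ (τ : Set (Euc N))) (G : Finset (Finset (Euc N)))
    (hG : ∀ σ, σ ∈ G ↔ σ ∈ nSimplicesOn n L ν ∧ openSimplex σ ⊆ openSimplex τ) :
    ∀ᶠ ε in nhdsWithin (0 : ℝ) (Set.Ioi 0), ∑ σ ∈ G, ratio x σ ε = ratio x τ ε := by
  set V := vectorSpan ℝ (τ : Set (Euc N)) with hVdef
  have hGhull : ∀ σ ∈ G, convexHull ℝ (σ : Set (Euc N)) ⊆ convexHull ℝ (τ : Set (Euc N)) := by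
    intro σ hσ
    obtain ⟨⟨h1, h2, h3⟩, h4⟩ := (hG σ).1 hσ
    exact hull_subset_of_open_subset (L.indep h1) (isCompact_hull τ).isClosed
      (h4.trans (openSimplex_subset τ))
  have hGV : ∀ σ ∈ G, thickS σ = thick V (convexHull ℝ (σ : Set (Euc N))) := by
    intro σ hσ
    obtain ⟨⟨h1, h2, h3⟩, h4⟩ := (hG σ).1 hσ
    rw [thickS, vectorSpan_eq_of_hull (L.indep h1) (K.indep hτ) (hGhull σ hσ) h2 hτcard]
  have hQ : (affineSpan ℝ (τ : Set (Euc N))).direction = V := direction_affineSpan ℝ _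
  have hxQ := hull_subset_affineSpan τ hxτ
  filter_upwards [eventually_ball (eventually_subset L hLfin hν hx)] with ε hε
  have hdisj : (G : Set (Finset (Euc N))).Pairwise
      (Function.onFun (AEDisjoint volume) fun σ => Metric.ball x ε ∩ thickS σ) := by
    intro σ₁ h₁ σ₂ h₂ hne
    have hm1 := (hG σ₁).1 h₁
    have hm2 := (hG σ₂).1 h₂
    have hcard : (σ₁ ∩ σ₂).card < τ.card := by
      rw [hτcard, ← hm1.1.2.1]
      refine Finset.card_lt_card (Finset.inter_subset_left.ssubset_of_ne fun h => hne ?_)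
      refine Finset.eq_of_subset_of_card_le (Finset.inter_eq_left.1 h) ?_
      rw [hm1.1.2.1, hm2.1.2.1]
    refine measure_mono_null ?_ (volume_thick_affineSpan (K.indep hτ) hcard)
    rintro y ⟨⟨-, hy1⟩, ⟨-, hy2⟩⟩
    rw [hGV _ h₁, ← add_sub_cancel x y,
      mem_thick_iff hQ ((hGhull _ h₁).trans (hull_subset_affineSpan τ)) hxQ] at hy1
    rw [hGV _ h₂, ← add_sub_cancel x y,
      mem_thick_iff hQ ((hGhull _ h₂).trans (hull_subset_affineSpan τ)) hxQ] at hy2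
    have h3 := L.inter_subset_convexHull hm1.1.1 hm2.1.1 ⟨hy1, hy2⟩
    rw [← Finset.coe_inter] at h3
    refine ⟨_, hull_subset_affineSpan _ h3, (y - x) - V.starProjection (y - x),
      Submodule.sub_starProjection_mem_orthogonal _, ?_⟩
    abel
  have hmeas : ∀ σ ∈ G, NullMeasurableSet (Metric.ball x ε ∩ thickS σ) volume := fun σ _ =>
    (measurableSet_ball.inter (isClosed_thickS σ).measurableSet).nullMeasurableSet
  have hU := measure_biUnion_finset₀ hdisj hmeas
  let Z : Set (Euc N) := (⋃ i ∈ (τ : Set (Euc N)), thick V (affineSpan ℝ (τ.erase i : Set (Euc N)))) ∪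
    ⋃ σ ∈ {σ ∈ L.faces | σ.card < τ.card}, thick V (affineSpan ℝ (σ : Set (Euc N)))
  have hZ : volume Z = 0 := by
    refine measure_union_null ?_ ?_
    · refine (measure_biUnion_null_iff τ.finite_toSet.countable).2 fun i hi => ?_
      exact volume_thick_affineSpan (K.indep hτ) (Finset.card_erase_lt_of_mem hi)
    · refine (measure_biUnion_null_iff (hLfin.subset (Set.sep_subset _ _)).countable).2
        fun σ hσ => ?_
      exact volume_thick_affineSpan (K.indep hτ) hσ.2
  have hle1 : (⋃ σ ∈ G, Metric.ball x ε ∩ thickS σ) ⊆ Metric.ball x ε ∩ thickS τ := by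
    refine Set.iUnion₂_subset fun σ hσ => Set.inter_subset_inter_right _ ?_
    rw [hGV σ hσ]
    rintro y ⟨c, hc, w, hw, rfl⟩
    exact ⟨c, hGhull σ hσ hc, w, hw, rfl⟩
  have hle2 : Metric.ball x ε ∩ thickS τ ⊆ (⋃ σ ∈ G, Metric.ball x ε ∩ thickS σ) ∪ Z := by
    rintro y ⟨hyb, hy⟩
    have hy' := hy
    rw [← add_sub_cancel x y, mem_thick_iff hQ (hull_subset_affineSpan τ) hxQ] at hy'
    set c := x + V.starProjection (y - x) with hc
    have hyc : y = c + ((y - x) - V.starProjection (y - x)) := by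
      rw [hc]
      abel
    have hw := V.sub_starProjection_mem_orthogonal (y - x)
    by_cases hco : c ∈ openSimplex τ
    · have hcL : c ∈ L.space := by
        rw [hsub.1]
        exact SimplicialComplex.convexHull_subset_space hτ hy'
      obtain ⟨σ, hσ, hcσ⟩ := exists_open_of_mem_space L hcL
      obtain ⟨τ', hτ', hσ'⟩ := hsub.2 σ hσ
      have : τ' = τ := eq_of_mem_open K hτ' hτ (hσ' hcσ) hco
      subst this
      have hcb : c ∈ Metric.ball x ε := by
        rw [Metric.mem_ball, dist_eq_norm, hc, add_sub_cancel_left]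
        rw [Metric.mem_ball, dist_eq_norm] at hyb
        exact (V.norm_starProjection_apply_le _).trans_lt hyb
      have hνσ : ν ⊆ σ := hε c hcb σ hσ (openSimplex_subset σ hcσ)
      have hcard : σ.card ≤ τ'.card := card_le_of_hull (L.indep hσ)
        (hull_subset_of_open_subset (L.indep hσ) (isCompact_hull τ').isClosed
          (hσ'.trans (openSimplex_subset τ')))
      rcases hcard.lt_or_eq with hlt | heq
      · right
        right
        refine Set.mem_biUnion (show σ ∈ {σ ∈ L.faces | σ.card < τ'.card} from ⟨hσ, hlt⟩) ?_
        exact ⟨c, hull_subset_affineSpan σ (openSimplex_subset σ hcσ), _, hw, hyc⟩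
      · left
        have hσG : σ ∈ G := (hG σ).2 ⟨⟨hσ, heq.trans hτcard, hνσ⟩, hσ'⟩
        refine Set.mem_biUnion hσG ⟨hyb, ?_⟩
        rw [hGV σ hσG]
        exact ⟨c, openSimplex_subset σ hcσ, _, hw, hyc⟩
    · right
      left
      obtain ⟨T, b, H⟩ := exists_coords τ (K.indep hτ)
      rw [H.mem_openSimplex_iff subset_rfl] at hco
      have hcc := (H.mem_convexHull_iff subset_rfl).1 hy'
      have : ∃ i ∈ τ, b i c = 0 := by
        by_contra hcon
        push Not at hcon
        exact hco ⟨fun v hv => lt_of_le_of_ne (hcc.1 v hv) (hcon v hv).symm, hcc.2⟩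
      obtain ⟨i, hi, hic⟩ := this
      refine Set.mem_biUnion (show i ∈ (τ : Set (Euc N)) from hi) ?_
      refine ⟨c, ?_, _, hw, hyc⟩
      refine (H.mem_affineSpan_iff (Finset.erase_subset i τ)).2 fun v hv => ?_
      by_cases hvi : v = i
      · rw [hvi, hic]
      · exact hcc.2 v fun hvτ => hv (Finset.mem_erase.2 ⟨hvi, hvτ⟩)
  have hvol : volume (Metric.ball x ε ∩ thickS τ) =
      ∑ σ ∈ G, volume (Metric.ball x ε ∩ thickS σ) := by
    rw [← hU]
    refine le_antisymm ?_ (measure_mono hle1)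
    calc _ ≤ _ := measure_mono hle2
      _ ≤ _ := measure_union_le _ _
      _ = _ := by rw [hZ, add_zero]
  unfold ratio
  rw [hvol, ENNReal.toReal_sum, Finset.sum_div]
  intro σ _
  exact ((measure_mono Set.inter_subset_left).trans_lt measure_ball_lt_top).ne

theorem angle_sum_subdivision {n : ℕ} (K L : SimplicialComplex ℝ (Euc N))
    (hKfin : K.faces.Finite) (hLfin : L.faces.Finite) (hdim : ∀ s ∈ K.faces, s.card ≤ n + 1)
    (hsub : IsSubdivision K L)
    (ν μ : Finset (Euc N)) (hν : ν ∈ L.faces) (hμ : μ ∈ K.faces)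
    (hcont : openSimplex ν ⊆ openSimplex μ) :
    ∑ᶠ σ ∈ nSimplicesOn n L ν, solidAngle ν σ = ∑ᶠ τ ∈ nSimplicesOn n K μ, solidAngle μ τ := by
  have hLn : (nSimplicesOn n L ν).Finite := hLfin.subset fun σ h => h.1
  have hKn : (nSimplicesOn n K μ).Finite := hKfin.subset fun σ h => h.1
  have hνne := SimplicialComplex.nonempty_of_mem_faces hν
  have hμne := SimplicialComplex.nonempty_of_mem_faces hμ
  have hx := centroid_mem ν (L.indep hν) hνne
  set x := ν.centroid ℝ id with hxdef
  have hxμ := hcont hx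
  rw [finsum_mem_eq_finite_toFinset_sum _ hLn, finsum_mem_eq_finite_toFinset_sum _ hKn]
  choose! g hgK hg using hsub.2
  have hmaps : ∀ σ ∈ hLn.toFinset, g σ ∈ hKn.toFinset := by
    intro σ hσ
    rw [Set.Finite.mem_toFinset] at hσ ⊢
    obtain ⟨h1, h2, h3⟩ := hσ
    have hh : convexHull ℝ (σ : Set (Euc N)) ⊆ convexHull ℝ (g σ : Set (Euc N)) :=
      hull_subset_of_open_subset (L.indep h1) (isCompact_hull _).isClosed
        ((hg σ h1).trans (openSimplex_subset _))
    refine ⟨hgK σ h1, le_antisymm (hdim _ (hgK σ h1)) ?_, ?_⟩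
    · rw [← h2]
      exact card_le_of_hull (L.indep h1) hh
    · exact subset_of_mem K hμ (hgK σ h1) hxμ
        (hh (convexHull_mono (by exact_mod_cast h3) (openSimplex_subset ν hx)))
  rw [← Finset.sum_fiberwise_of_maps_to hmaps]
  refine Finset.sum_congr rfl fun τ hτ => ?_
  rw [Set.Finite.mem_toFinset] at hτ
  obtain ⟨hτ1, hτ2, hτ3⟩ := hτ
  set G := hLn.toFinset.filter fun σ => g σ = τ with hGdef
  have hG : ∀ σ, σ ∈ G ↔ σ ∈ nSimplicesOn n L ν ∧ openSimplex σ ⊆ openSimplex τ := by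
    intro σ
    rw [hGdef, Finset.mem_filter, Set.Finite.mem_toFinset]
    refine and_congr_right fun hσ => ⟨fun h => ?_, fun h => ?_⟩
    · rw [← h]
      exact hg σ hσ.1
    · have hc := centroid_mem σ (L.indep hσ.1) (SimplicialComplex.nonempty_of_mem_faces hσ.1)
      exact eq_of_mem_open K (hgK σ hσ.1) hτ1 (hg σ hσ.1 hc) (h hc)
  have hxτ : x ∈ convexHull ℝ (τ : Set (Euc N)) :=
    convexHull_mono (by exact_mod_cast hτ3) (openSimplex_subset μ hxμ)
  have e1 := volume_fiber K L hLfin hsub hν hτ1 hτ2 hx hxτ G hG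
  have e2 := solidAngle_eq (K.indep hτ1) hτ3 hμne hxμ
  have e3 : ∀ᶠ ε in nhdsWithin (0 : ℝ) (Set.Ioi 0), ∀ σ ∈ (G : Set (Finset (Euc N))),
      ratio x σ ε = solidAngle ν σ := by
    rw [Filter.eventually_all_finite G.finite_toSet]
    intro σ hσ
    have h := ((hG σ).1 hσ).1
    exact solidAngle_eq (L.indep h.1) h.2.2 hνne hx
  obtain ⟨ε, h1, h2, h3⟩ := (e1.and (e2.and e3)).exists
  rw [← h2, ← h1]
  exact Finset.sum_congr rfl fun σ hσ => (h3 σ hσ).symm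

/-- Subdivision preserves the stratification rank and the generalized angle
defect: if `L` is a subdivision of the finite `n`-dimensional complex `K` and
`ν` is an `i`-simplex of `L` whose open simplex is contained in the open
`r`-simplex `μ` of `K`, then `r_L(ν) = r_K(μ)` and `D_L(ν) = D_K(μ)`. -/
theorem rank_defect_subdivision {N n i r : ℕ}
    (K L : SimplicialComplex ℝ (Euc N))
    (hKfin : K.faces.Finite) (hLfin : L.faces.Finite) (hdim : IsNDim n K)
    (hsub : IsSubdivision K L)
    (ν μ : Finset (Euc N)) (hν : ν ∈ L.faces) (hμ : μ ∈ K.faces)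
    (hνcard : ν.card = i + 1) (hμcard : μ.card = r + 1)
    (hcont : openSimplex ν ⊆ openSimplex μ) :
    strRank n L ν = strRank n K μ ∧ defect n L ν = defect n K μ := by
  have h1 := strRank_subdivision (n := n) K L hKfin hsub ν μ hν hμ hcont
  refine ⟨h1, ?_⟩
  unfold defect
  rw [h1, angle_sum_subdivision K L hKfin hLfin hdim.1 hsub ν μ hν hμ hcont]

end AngleDefectPaper
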